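/- Let (Ω, μ) be a probability space, T : Ω → Ω an ergodic measure-preserving transformation, and A : Ω → GL(d, ℝ) a measurable linear cocycle with ∫_Ω log⁺‖A(ω)‖ dμ(ω) < ∞. Then at least one of the following holds: (1) there exists λ ∈ ℝ ∪ {−∞} such that for μ-a.e. ω ∈ Ω and every nonzero v ∈ ℝ^d, lim_{N→∞} (1/N) log ‖A^N(ω) v‖ = λ, and for fixed ω the convergence is uniform over all v with ‖v‖ = 1; or (2) there exists a measurable assignment, defined for μ-a.e. ω, of a linear subspace E(ω) ⊂ ℝ^d with 0 < dim E(ω) < d and A(ω) E(ω) = E(Tω) for μ-a.e. ω. -/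

import Mathlib

open MeasureTheory Filter Topology

/-- The operator norm of a square real matrix, with respect to Euclidean norms. -/
noncomputable def matOpNorm {d : ℕ} (M : Matrix (Fin d) (Fin d) ℝ) : ℝ :=
  ‖Matrix.toEuclideanCLM (𝕜 := ℝ) M‖

/-- The cocycle iterates `A^N(ω) = A(T^{N-1} ω) ⋯ A(T ω) A(ω)`. -/
noncomputable def cocycIter {Ω : Type*} {d : ℕ} (T : Ω → Ω)
    (A : Ω → Matrix (Fin d) (Fin d) ℝ) : ℕ → Ω → Matrix (Fin d) (Fin d) ℝ
  | 0, _ => 1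
  | n + 1, ω => cocycIter T A n (T ω) * A ω

/-!
By Kingman's subadditive ergodic theorem, the norm of the `k`-th exterior power of the iterates
grows at an almost surely constant exponential rate `L k`, and always `L k ≤ k * L 1`. If
`L 1 = -∞`, every vector decays superexponentially. If `L d = d * L 1` in the top degree `d`, then
the least expansion of a vector, which Cramer's rule bounds below by a multiple of
`‖Λ^d‖ / ‖Λ^(d - 1)‖`, has the same rate `L 1` as the norm, and all vectors grow uniformly.

Otherwise there is `k` with `0 < k < d` such that `L k = k * L 1` while `L (k + 1)` is strictly
smaller than `(k + 1) * L 1`. At each time `n`, the vectors on which the `n`-th iterate is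
exponentially smaller than its norm lie close to a subspace of codimension `k`, which changes
exponentially little from `n` to `n + 1`. A limit of vectors in these subspaces is a nonzero vector
growing strictly slower than the norm. So the vectors growing at most like
`exp ((L 1 - ε) * n)` form a nontrivial subspace, which is visibly measurable and invariant.
-/

section Rates

theorem tendsto_coe_div_of_forall_rat {ι : Type*} {F : Filter ι} {x : ι → ℝ} {N : ι → ℕ}
    {l : EReal} (hN : Tendsto N F atTop)
    (hup : ∀ q : ℚ, l < ((q : ℝ) : EReal) → ∀ᶠ i in F, x i ≤ q * N i)
    (hlow : ∀ q : ℚ, ((q : ℝ) : EReal) < l → ∀ᶠ i in F, q * N i ≤ x i) :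
    Tendsto (fun i => ((x i / N i : ℝ) : EReal)) F (𝓝 l) := by
  refine tendsto_order.2 ⟨fun a ha => ?_, fun a ha => ?_⟩
  · obtain ⟨q, haq, hql⟩ := EReal.lt_iff_exists_rat_btwn.1 ha
    filter_upwards [hlow q hql, hN.eventually_gt_atTop 0] with i hi hi0
    refine haq.trans_le (EReal.coe_le_coe_iff.2 ?_)
    rwa [le_div_iff₀ (by exact_mod_cast hi0)]
  · obtain ⟨q, hlq, hqa⟩ := EReal.lt_iff_exists_rat_btwn.1 ha
    filter_upwards [hup q hlq, hN.eventually_gt_atTop 0] with i hi hi0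
    refine lt_of_le_of_lt (EReal.coe_le_coe_iff.2 ?_) hqa
    rwa [div_le_iff₀ (by exact_mod_cast hi0)]

theorem eventually_le_mul_natCast {δ : ℝ} (hδ : 0 < δ) (K : ℝ) : ∀ᶠ n : ℕ in atTop, K ≤ δ * n :=
  (tendsto_natCast_atTop_atTop.const_mul_atTop hδ).eventually_ge_atTop K

theorem eventually_forall_lt_le_mul_natCast {x : ℕ → ℝ} {δ : ℝ} (hδ : 0 < δ)
    (hx : ∀ᶠ n : ℕ in atTop, x n ≤ δ * n) : ∀ᶠ n : ℕ in atTop, ∀ j < n, x j ≤ δ * n := by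
  obtain ⟨m, hm⟩ := eventually_atTop.1 hx
  obtain ⟨K, hK⟩ := ((Set.finite_Iio m).image x).bddAbove
  filter_upwards [eventually_le_mul_natCast hδ K] with n hn j hj
  rcases lt_or_ge j m with hjm | hmj
  · exact (hK (Set.mem_image_of_mem x hjm)).trans hn
  · exact (hm j hmj).trans (by gcongr)

theorem eventually_mul_exp_le_exp {q r : ℝ} (hqr : q < r) (K : ℝ) :
    ∀ᶠ n : ℕ in atTop, K * Real.exp (q * n) ≤ Real.exp (r * n) := by
  filter_upwards [eventually_le_mul_natCast (sub_pos.2 hqr) K] with n hn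
  calc K * Real.exp (q * n) ≤ Real.exp ((r - q) * n) * Real.exp (q * n) := by
        gcongr
        exact hn.trans ((le_add_of_nonneg_right zero_le_one).trans (Real.add_one_le_exp _))
    _ = Real.exp (r * n) := by rw [← Real.exp_add]; ring_nf

/-- The positive sequence `a` grows at the exponential rate `l`. Positivity is part of the notion
because the junk value `Real.log 0 = 0` would give the zero sequence the rate `0`. -/
structure HasExpRate (a : ℕ → ℝ) (l : EReal) : Prop where
  pos (n : ℕ) : 0 < a n
  tendsto_log_div : Tendsto (fun n : ℕ => ((Real.log (a n) / n : ℝ) : EReal)) atTop (𝓝 l)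

namespace HasExpRate

variable {a : ℕ → ℝ} {l : EReal} {q : ℝ}

theorem eventually_le_exp (h : HasExpRate a l) (hq : l < q) :
    ∀ᶠ n : ℕ in atTop, a n ≤ Real.exp (q * n) := by
  filter_upwards [h.tendsto_log_div.eventually_lt_const hq, eventually_gt_atTop 0] with n hn h0
  rw [EReal.coe_lt_coe_iff, div_lt_iff₀ (by exact_mod_cast h0)] at hn
  exact (Real.log_le_iff_le_exp (h.pos n)).1 hn.le

theorem eventually_exp_le (h : HasExpRate a l) (hq : q < l) :
    ∀ᶠ n : ℕ in atTop, Real.exp (q * n) ≤ a n := by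
  filter_upwards [h.tendsto_log_div.eventually_const_lt hq, eventually_gt_atTop 0] with n hn h0
  rw [EReal.coe_lt_coe_iff, lt_div_iff₀ (by exact_mod_cast h0)] at hn
  exact (Real.le_log_iff_exp_le (h.pos n)).1 hn.le

theorem eventually_le_exp_mul {b : ℕ → ℝ} {m : EReal} {r : ℝ} (hb : HasExpRate b m)
    (ha : HasExpRate a l) (hq : q < l) (hqr : m < ((r + q : ℝ) : EReal)) :
    ∀ᶠ n : ℕ in atTop, b n ≤ Real.exp (r * n) * a n := by
  filter_upwards [hb.eventually_le_exp hqr, ha.eventually_exp_le hq] with n hbn han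
  calc b n ≤ Real.exp ((r + q) * n) := hbn
    _ = Real.exp (r * n) * Real.exp (q * n) := by rw [← Real.exp_add, ← add_mul]
    _ ≤ Real.exp (r * n) * a n := by gcongr

end HasExpRate

end Rates

section SubadditiveProcess

variable {Ω : Type*} {T : Ω → Ω} {f h : Ω → ℝ} {g : ℕ → Ω → ℝ}

/-- Kingman's subadditive processes over a transformation `T`. -/
def IsSubadditiveProcess (T : Ω → Ω) (g : ℕ → Ω → ℝ) : Prop :=
  ∀ m n ω, g (m + n) ω ≤ g m ω + g n (T^[m] ω)

theorem IsSubadditiveProcess.add_mul_natCast (hsub : IsSubadditiveProcess T g) (c : ℝ) :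
    IsSubadditiveProcess T fun n ω => g n ω + c * n := fun m n ω => by
  push_cast
  linarith [hsub m n ω]

theorem IsSubadditiveProcess.le_birkhoffSum (hsub : IsSubadditiveProcess T g)
    (h1 : ∀ ω, g 1 ω ≤ f ω) {n : ℕ} (hn : 0 < n) (ω : Ω) : g n ω ≤ birkhoffSum T f n ω := by
  induction n, hn using Nat.le_induction with
  | base => simpa using h1 ω
  | succ n _ ih =>
    rw [birkhoffSum_succ]
    exact (hsub n 1 ω).trans (add_le_add ih (h1 _))

/-- Greedily cut the orbit segment into blocks of length at most `M` starting in `s`, which cost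
nothing, and single steps; only the steps outside `s` and an incomplete last block cost. -/
theorem IsSubadditiveProcess.le_birkhoffSum_indicator_add (hsub : IsSubadditiveProcess T g)
    (h1 : ∀ ω, g 1 ω ≤ f ω) (hf : 0 ≤ f) {s : Set Ω} {M : ℕ}
    (hs : ∀ ω ∈ s, ∃ n, 0 < n ∧ n ≤ M ∧ g n ω ≤ 0) {K : ℝ} {N : ℕ} (hN : 0 < N) {ω : Ω}
    (hK : ∀ j < N, f (T^[j] ω) ≤ K) :
    g N ω ≤ birkhoffSum T (sᶜ.indicator f) N ω + M * K := by
  have hnonneg : ∀ n ω, 0 ≤ birkhoffSum T (sᶜ.indicator f) n ω := fun n ω =>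
    Finset.sum_nonneg fun j _ => Set.indicator_nonneg (fun ω _ => hf ω) _
  have hK0 : 0 ≤ M * K := mul_nonneg M.cast_nonneg ((hf ω).trans (hK 0 hN))
  induction N using Nat.strong_induction_on generalizing ω with
  | _ N ih =>
  have cut : ∀ m, 0 < m → m ≤ N → g m ω ≤ birkhoffSum T (sᶜ.indicator f) m ω →
      g N ω ≤ birkhoffSum T (sᶜ.indicator f) N ω + M * K := by
    intro m hm hmN hle
    rcases hmN.eq_or_lt with rfl | hlt
    · linarith
    obtain ⟨n, rfl⟩ := Nat.exists_eq_add_of_le hmN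
    have hrest := ih n (by omega) (by omega) (ω := T^[m] ω)
      (fun j hj => by
        rw [← Function.iterate_add_apply]
        exact hK (j + m) (by omega))
    rw [birkhoffSum_add]
    linarith [hsub m n ω]
  by_cases hω : ω ∈ s
  · obtain ⟨n, hn, hnM, hle⟩ := hs ω hω
    rcases le_or_gt n N with hnN | hNn
    · exact cut n hn hnN (hle.trans (hnonneg n ω))
    · calc g N ω ≤ birkhoffSum T f N ω := hsub.le_birkhoffSum h1 hN ω
        _ ≤ N * K := by
          simpa [birkhoffSum] using Finset.sum_le_card_nsmul (Finset.range N)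
            (fun j => f (T^[j] ω)) K fun j hj => hK j (Finset.mem_range.1 hj)
        _ ≤ M * K := by
          have := (hf ω).trans (hK 0 hN)
          gcongr
          omega
        _ ≤ _ := le_add_of_nonneg_left (hnonneg N ω)
  · exact cut 1 one_pos hN (by simpa [hω] using h1 ω)

end SubadditiveProcess

section MaximalInequality

variable {Ω : Type*} {T : Ω → Ω} {f : Ω → ℝ}

/-- The maximum of the Birkhoff sums `birkhoffSum T f m` over `m ≤ n`, defined by the recursion on
which the maximal inequality rests. -/
noncomputable def birkhoffMax (T : Ω → Ω) (f : Ω → ℝ) : ℕ → Ω → ℝ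
  | 0, _ => 0
  | n + 1, ω => max 0 (f ω + birkhoffMax T f n (T ω))

theorem birkhoffMax_nonneg : ∀ (n : ℕ) (ω : Ω), 0 ≤ birkhoffMax T f n ω
  | 0, _ => le_rfl
  | _ + 1, _ => le_max_left _ _

theorem birkhoffMax_le_succ (n : ℕ) (ω : Ω) : birkhoffMax T f n ω ≤ birkhoffMax T f (n + 1) ω := by
  induction n generalizing ω with
  | zero => exact birkhoffMax_nonneg _ _
  | succ n ih => exact max_le_max le_rfl (by gcongr; exact ih (T ω))

theorem birkhoffSum_le_birkhoffMax {m n : ℕ} (hmn : m ≤ n) (ω : Ω) :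
    birkhoffSum T f m ω ≤ birkhoffMax T f n ω := by
  induction n generalizing m ω with
  | zero => simp [Nat.le_zero.1 hmn, birkhoffMax]
  | succ n ih =>
    cases m with
    | zero => simpa using birkhoffMax_nonneg (n + 1) ω
    | succ m =>
      rw [birkhoffSum_succ']
      exact le_max_of_le_right (by gcongr; exact ih (by omega) (T ω))

theorem birkhoffMax_le_indicator_add (n : ℕ) (ω : Ω) :
    birkhoffMax T f (n + 1) ω ≤
      {ω | 0 < birkhoffMax T f (n + 1) ω}.indicator f ω + birkhoffMax T f n (T ω) := by
  by_cases hω : 0 < birkhoffMax T f (n + 1) ω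
  · rw [Set.indicator_of_mem (by exact hω)]
    exact (max_eq_right_of_lt (by simpa [birkhoffMax] using hω)).le
  · rw [Set.indicator_of_notMem (by exact hω), zero_add]
    exact (not_lt.1 hω).trans (birkhoffMax_nonneg _ _)

variable [MeasurableSpace Ω] {μ : Measure Ω}

theorem measurable_birkhoffMax (hT : Measurable T) (hf : Measurable f) (n : ℕ) :
    Measurable (birkhoffMax T f n) := by
  induction n with
  | zero => exact measurable_const
  | succ n ih => exact measurable_const.max (hf.add (ih.comp hT))

theorem integrable_birkhoffMax (hT : MeasurePreserving T μ μ) (hf : Integrable f μ) (n : ℕ) :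
    Integrable (birkhoffMax T f n) μ := by
  induction n with
  | zero => exact integrable_zero _ _ _
  | succ n ih => exact (integrable_zero _ _ _).sup (hf.add (hT.integrable_comp_of_integrable ih))

theorem setIntegral_birkhoffMax_pos_nonneg (hT : MeasurePreserving T μ μ) (hfm : Measurable f)
    (hf : Integrable f μ) (n : ℕ) : 0 ≤ ∫ ω in {ω | 0 < birkhoffMax T f (n + 1) ω}, f ω ∂μ := by
  have hs : MeasurableSet {ω | 0 < birkhoffMax T f (n + 1) ω} :=
    measurableSet_lt measurable_const (measurable_birkhoffMax hT.measurable hfm _)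
  have hint := integrable_birkhoffMax hT hf
  have hcomp : ∫ ω, birkhoffMax T f n (T ω) ∂μ = ∫ ω, birkhoffMax T f n ω ∂μ := by
    rw [← integral_map hT.measurable.aemeasurable (by rw [hT.map_eq]; exact (hint n).1), hT.map_eq]
  have hmono : ∫ ω, birkhoffMax T f n ω ∂μ ≤ ∫ ω, birkhoffMax T f (n + 1) ω ∂μ :=
    integral_mono (hint n) (hint (n + 1)) (birkhoffMax_le_succ n)
  have hle := integral_mono (hint (n + 1))
    ((hf.indicator hs).add (hT.integrable_comp_of_integrable (hint n)))
    (birkhoffMax_le_indicator_add n)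
  rw [integral_add' (hf.indicator hs) (hT.integrable_comp_of_integrable (hint n)),
    integral_indicator hs] at hle
  simp only [Function.comp_apply] at hle
  linarith

theorem tendsto_setIntegral_compl_of_ae_eventually_mem {s : ℕ → Set Ω}
    (hs : ∀ n, MeasurableSet (s n)) (hf : Integrable f μ) (h : ∀ᵐ ω ∂μ, ∀ᶠ n in atTop, ω ∈ s n) :
    Tendsto (fun n => ∫ ω in (s n)ᶜ, f ω ∂μ) atTop (𝓝 0) := by
  simp_rw [← integral_indicator (hs _).compl]
  rw [← integral_zero Ω ℝ (μ := μ)]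
  refine tendsto_integral_of_dominated_convergence (fun ω => ‖f ω‖)
    (fun n => (hf.indicator (hs n).compl).1) hf.norm
    (fun n => .of_forall fun ω => norm_indicator_le_norm_self f ω) ?_
  filter_upwards [h] with ω hω
  refine tendsto_const_nhds.congr' ?_
  filter_upwards [hω] with n hn
  simp [hn]

theorem integral_nonneg_of_ae_exists_birkhoffSum_pos (hT : MeasurePreserving T μ μ)
    (hfm : Measurable f) (hf : Integrable f μ) (h : ∀ᵐ ω ∂μ, ∃ n, 0 < birkhoffSum T f n ω) :
    0 ≤ ∫ ω, f ω ∂μ := by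
  have hs : ∀ n, MeasurableSet {ω | 0 < birkhoffMax T f (n + 1) ω} := fun n =>
    measurableSet_lt measurable_const (measurable_birkhoffMax hT.measurable hfm _)
  refine le_of_tendsto' (tendsto_setIntegral_compl_of_ae_eventually_mem hs hf ?_) fun n => ?_
  · filter_upwards [h] with ω ⟨m, hm⟩
    filter_upwards [eventually_ge_atTop m] with n hn
    exact hm.trans_le (birkhoffSum_le_birkhoffMax (by omega) ω)
  · rw [← integral_add_compl (hs n) hf]
    exact le_add_of_nonneg_left (setIntegral_birkhoffMax_pos_nonneg hT hfm hf n)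

end MaximalInequality

section Kingman

variable {Ω : Type*} [MeasurableSpace Ω] {μ : Measure Ω} {T : Ω → Ω} {f : Ω → ℝ} {g : ℕ → Ω → ℝ}

theorem ae_eventually_comp_iterate_le [IsProbabilityMeasure μ] (hT : MeasurePreserving T μ μ)
    (hfm : Measurable f) (hf : Integrable f μ) {ε : ℝ} (hε : 0 < ε) :
    ∀ᵐ ω ∂μ, ∀ᶠ n : ℕ in atTop, f (T^[n] ω) ≤ ε * n := by
  have hsum : ∑' n : ℕ, μ {ω | |f ω| / ε ∈ Set.Ioi (n : ℝ)} < ⊤ :=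
    @ProbabilityTheory.tsum_prob_mem_Ioi_lt_top Ω ⟨μ⟩ ‹_› _ (hf.abs.div_const ε)
      fun ω => by positivity
  have hs : ∀ n : ℕ, MeasurableSet {ω | |f ω| / ε ∈ Set.Ioi (n : ℝ)} := fun n =>
    (hfm.abs.div_const ε) measurableSet_Ioi
  have hBC := ae_eventually_notMem (μ := μ)
    (s := fun n : ℕ => T^[n] ⁻¹' {ω | |f ω| / ε ∈ Set.Ioi (n : ℝ)})
    (by simpa only [(hT.iterate _).measure_preimage (hs _).nullMeasurableSet] using hsum.ne)
  filter_upwards [hBC] with ω hω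
  filter_upwards [hω] with n hn
  have : |f (T^[n] ω)| / ε ≤ n := not_lt.1 hn
  rw [div_le_iff₀ hε] at this
  linarith [le_abs_self (f (T^[n] ω))]

/-- The zero-one law behind both ergodic theorems: the lower growth rate of `g` cannot decrease
along an orbit, hence is almost surely constant. -/
theorem ae_frequently_lt_or_ae_eventually_le [IsFiniteMeasure μ] (hT : Ergodic T μ)
    (hg : ∀ n, Measurable (g n)) (hstep : ∀ n ω, g (n + 1) ω ≤ f ω + g n (T ω))
    {q r : ℝ} (hqr : q < r) :
    (∀ᵐ ω ∂μ, ∃ᶠ n : ℕ in atTop, g n ω < r * n) ∨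
      (∀ᵐ ω ∂μ, ∀ᶠ n : ℕ in atTop, q * n ≤ g n ω) := by
  let s : Set Ω := {ω | ∀ t : ℚ, q < t → ∃ᶠ n : ℕ in atTop, g n ω < t * n}
  have hs : MeasurableSet s := by
    simp only [s, frequently_atTop, Set.ofPred_forall, Set.ofPred_exists]
    exact .iInter fun t => .iInter fun _ => .iInter fun a => .iUnion fun b =>
      (MeasurableSet.const _).inter (measurableSet_lt (hg b) measurable_const)
  have hinv : T ⁻¹' s ⊆ s := by
    intro ω hω t ht
    obtain ⟨t', hqt', htt'⟩ := exists_rat_btwn ht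
    have hfreq := (hω t' hqt').and_eventually
      (eventually_le_mul_natCast (sub_pos.2 htt') (f ω - t))
    refine (tendsto_add_atTop_nat 1).frequently (hfreq.mono fun n ⟨_, hn'⟩ => ?_)
    have := hstep n ω
    push_cast at hn' ⊢
    linarith
  rcases hT.ae_empty_or_univ_of_preimage_ae_le hs.nullMeasurableSet hinv.eventuallyLE with h | h
  · right
    filter_upwards [h] with ω hω
    have hω' : ω ∉ s := fun h' => Set.notMem_empty ω (hω.mp h')
    simp only [s, Set.mem_ofPred_eq, not_forall, not_frequently, not_lt] at hω'
    obtain ⟨t, hqt, ht⟩ := hω'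
    filter_upwards [ht] with n hn
    exact hn.trans' (by gcongr)
  · left
    obtain ⟨t, hqt, htr⟩ := exists_rat_btwn hqr
    filter_upwards [h] with ω hω
    have hω' : ω ∈ s := hω.mpr trivial
    exact (hω' t hqt).mono fun n hn => hn.trans_le (by gcongr)

variable [IsProbabilityMeasure μ]

theorem ae_eventually_birkhoffSum_le (hT : Ergodic T μ) (hfm : Measurable f)
    (hf : Integrable f μ) {q : ℝ} (hq : ∫ ω, f ω ∂μ < q) :
    ∀ᵐ ω ∂μ, ∀ᶠ n : ℕ in atTop, birkhoffSum T f n ω ≤ q * n := by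
  obtain ⟨r, hr, hrq⟩ := exists_between hq
  have hm : ∀ n, Measurable (birkhoffSum T f n) := fun n =>
    Finset.measurable_fun_sum _ fun j _ => hfm.comp (hT.measurable.iterate j)
  rcases ae_frequently_lt_or_ae_eventually_le hT (fun n => (hm n).neg) (f := -f)
    (fun n ω => by simp [birkhoffSum_succ']) (neg_lt_neg hrq) with hfr | hev
  · have hpos : 0 ≤ ∫ ω, (f ω - r) ∂μ := by
      refine integral_nonneg_of_ae_exists_birkhoffSum_pos hT.toMeasurePreserving
        (hfm.sub_const r) (hf.sub (integrable_const r)) ?_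
      filter_upwards [hfr] with ω hω
      obtain ⟨n, hn⟩ := hω.exists
      refine ⟨n, ?_⟩
      simp only [birkhoffSum, Finset.sum_sub_distrib, Finset.sum_const, Finset.card_range,
        nsmul_eq_mul, Pi.neg_apply] at hn ⊢
      linarith
    rw [integral_sub hf (integrable_const r)] at hpos
    simp only [integral_const, probReal_univ, smul_eq_mul, one_mul, sub_nonneg] at hpos
    linarith
  · filter_upwards [hev] with ω hω
    filter_upwards [hω] with n hn
    simp only [Pi.neg_apply] at hn
    linarith

theorem ae_eventually_le_mul_of_ae_exists_neg (hT : Ergodic T μ) (hg : ∀ n, Measurable (g n))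
    (hsub : IsSubadditiveProcess T g) (hint : Integrable (fun ω => max (g 1 ω) 0) μ)
    (hneg : ∀ᵐ ω ∂μ, ∃ n, 0 < n ∧ g n ω < 0) {ε : ℝ} (hε : 0 < ε) :
    ∀ᵐ ω ∂μ, ∀ᶠ n : ℕ in atTop, g n ω ≤ ε * n := by
  set b : Ω → ℝ := fun ω => max (g 1 ω) 0
  have hb : Measurable b := (hg 1).max measurable_const
  let s : ℕ → Set Ω := fun M => {ω | ∃ n, 0 < n ∧ n ≤ M ∧ g n ω < 0}
  have hs : ∀ M, MeasurableSet (s M) := fun M => by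
    simp only [s, Set.ofPred_exists]
    exact .iUnion fun n => (MeasurableSet.const _).inter
      ((MeasurableSet.const _).inter (measurableSet_lt (hg n) measurable_const))
  have hlim := tendsto_setIntegral_compl_of_ae_eventually_mem hs hint (by
    filter_upwards [hneg] with ω ⟨n, hn, hlt⟩
    exact (eventually_ge_atTop n).mono fun M hM => ⟨n, hn, hM, hlt⟩)
  obtain ⟨M, hM⟩ := (hlim.eventually_lt_const (half_pos hε)).exists
  rw [← integral_indicator (hs M).compl] at hM
  obtain ⟨δ, hδ, hMδ⟩ : ∃ δ > 0, ε / 2 + M * δ ≤ ε :=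
    ⟨ε / (2 * (M + 1)), by positivity, by field_simp; linarith⟩
  filter_upwards [ae_eventually_birkhoffSum_le hT (hb.indicator (hs M).compl)
    (hint.indicator (hs M).compl) hM,
    ae_eventually_comp_iterate_le hT.toMeasurePreserving hb hint hδ] with ω h1 h2
  filter_upwards [h1, eventually_forall_lt_le_mul_natCast hδ h2, eventually_gt_atTop 0]
    with n hn hlast hn0
  calc g n ω ≤ birkhoffSum T ((s M)ᶜ.indicator b) n ω + M * (δ * n) :=
        hsub.le_birkhoffSum_indicator_add (s := s M) (fun ω => le_max_left _ _)
          (fun ω => le_max_right _ _) (fun ω ⟨m, hm0, hmM, hm⟩ => ⟨m, hm0, hmM, hm.le⟩) hn0 hlast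
    _ ≤ (ε / 2 + M * δ) * n := by linarith
    _ ≤ ε * n := by gcongr

theorem ae_eventually_le_or_ae_eventually_ge (hT : Ergodic T μ) (hg : ∀ n, Measurable (g n))
    (hsub : IsSubadditiveProcess T g) (hint : Integrable (fun ω => max (g 1 ω) 0) μ)
    {p q : ℝ} (hpq : p < q) :
    (∀ᵐ ω ∂μ, ∀ᶠ n : ℕ in atTop, g n ω ≤ q * n) ∨
      (∀ᵐ ω ∂μ, ∀ᶠ n : ℕ in atTop, p * n ≤ g n ω) := by
  obtain ⟨r, hpr, hrq⟩ := exists_between hpq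
  refine (ae_frequently_lt_or_ae_eventually_le hT hg (f := g 1)
    (fun n ω => by simpa [add_comm] using hsub 1 n ω) hpr).imp_left fun hfreq => ?_
  have hle := ae_eventually_le_mul_of_ae_exists_neg hT (g := fun n ω => g n ω + -r * n)
    (fun n => (hg n).add_const _) (hsub.add_mul_natCast (-r)) ?_ ?_ (sub_pos.2 hrq)
  · filter_upwards [hle] with ω hω
    filter_upwards [hω] with n hn
    linarith
  · refine (hint.add (integrable_const |r|)).mono'
      (((hg 1).add_const _).max measurable_const).aestronglyMeasurable (.of_forall fun ω => ?_)
    rw [Real.norm_of_nonneg (le_max_right _ _)]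
    exact max_le (by
      simp only [Nat.cast_one, mul_one, Pi.add_apply]
      gcongr
      exacts [le_max_left _ _, neg_le_abs r]) (add_nonneg (le_max_right _ _) (abs_nonneg r))
  · filter_upwards [hfreq] with ω hω
    obtain ⟨n, hlt, hn⟩ := (hω.and_eventually (eventually_gt_atTop 0)).exists
    exact ⟨n, hn, by linarith⟩

/-- Kingman's ergodic theorem for an ergodic transformation, without the formula for the limit. -/
theorem IsSubadditiveProcess.exists_ae_tendsto_div (hsub : IsSubadditiveProcess T g)
    (hT : Ergodic T μ) (hg : ∀ n, Measurable (g n))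
    (hint : Integrable (fun ω => max (g 1 ω) 0) μ) :
    ∃ l : EReal, l ≠ ⊤ ∧
      ∀ᵐ ω ∂μ, Tendsto (fun n : ℕ => ((g n ω / n : ℝ) : EReal)) atTop (𝓝 l) := by
  let S : Set EReal := (↑) '' {q : ℝ | ∀ᵐ ω ∂μ, ∀ᶠ n : ℕ in atTop, g n ω ≤ q * n}
  have hup : ∀ q : ℚ, sInf S < ((q : ℝ) : EReal) →
      ∀ᵐ ω ∂μ, ∀ᶠ n : ℕ in atTop, g n ω ≤ q * n := by
    intro q hq
    obtain ⟨_, ⟨r, hr, rfl⟩, hrq⟩ := sInf_lt_iff.1 hq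
    filter_upwards [hr] with ω hω
    filter_upwards [hω] with n hn
    exact hn.trans (by gcongr; exact (EReal.coe_lt_coe_iff.1 hrq).le)
  have hlow : ∀ p : ℚ, ((p : ℝ) : EReal) < sInf S →
      ∀ᵐ ω ∂μ, ∀ᶠ n : ℕ in atTop, p * n ≤ g n ω := by
    intro p hp
    obtain ⟨q, hpq, hq⟩ := EReal.lt_iff_exists_real_btwn.1 hp
    exact (ae_eventually_le_or_ae_eventually_ge hT hg hsub hint
      (EReal.coe_lt_coe_iff.1 hpq)).resolve_left fun h => hq.not_ge (sInf_le ⟨q, h, rfl⟩)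
  refine ⟨sInf S, ne_top_of_le_ne_top (EReal.coe_ne_top ((∫ ω, max (g 1 ω) 0 ∂μ) + 1))
    (sInf_le (Set.mem_image_of_mem _ ?_)), ?_⟩
  · filter_upwards [ae_eventually_birkhoffSum_le hT ((hg 1).max measurable_const) hint
      (lt_add_one _)] with ω hω
    filter_upwards [hω, eventually_gt_atTop 0] with n hn hn0
    exact (hsub.le_birkhoffSum (fun ω => le_max_left _ _) hn0 ω).trans hn
  · filter_upwards [ae_all_iff.2 fun q : ℚ => eventually_imp_distrib_left.2 (hup q),
      ae_all_iff.2 fun q : ℚ => eventually_imp_distrib_left.2 (hlow q)] with ω h1 h2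
    exact tendsto_coe_div_of_forall_rat tendsto_id h1 h2

end Kingman

section ExteriorNorm

variable {𝕜 V W X : Type*} [NontriviallyNormedField 𝕜]
  [NormedAddCommGroup V] [NormedSpace 𝕜 V] [NormedAddCommGroup W] [NormedSpace 𝕜 W]
  [NormedAddCommGroup X] [NormedSpace 𝕜 X] {k : ℕ}

/-- The norm of the `k`-th exterior power of `f`, realised as the pull-back of alternating
`k`-forms along `f`. -/
noncomputable def exteriorNorm (k : ℕ) (f : V →L[𝕜] W) : ℝ :=
  ‖(ContinuousAlternatingMap.compContinuousLinearMapCLM f :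
    (W [⋀^Fin k]→L[𝕜] 𝕜) →L[𝕜] V [⋀^Fin k]→L[𝕜] 𝕜)‖

theorem exteriorNorm_nonneg (k : ℕ) (f : V →L[𝕜] W) : 0 ≤ exteriorNorm k f := by
  rw [exteriorNorm]
  positivity

theorem norm_compContinuousLinearMap_le_exteriorNorm_mul {k : ℕ} (f : V →L[𝕜] W)
    (α : W [⋀^Fin k]→L[𝕜] 𝕜) : ‖α.compContinuousLinearMap f‖ ≤ exteriorNorm k f * ‖α‖ :=
  (ContinuousAlternatingMap.compContinuousLinearMapCLM f).le_opNorm α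

theorem norm_apply_comp_le_exteriorNorm_mul {k : ℕ} (f : V →L[𝕜] W) (α : W [⋀^Fin k]→L[𝕜] 𝕜)
    (v : Fin k → V) : ‖α (f ∘ v)‖ ≤ exteriorNorm k f * ‖α‖ * ∏ i, ‖v i‖ :=
  (α.compContinuousLinearMap f).le_of_opNorm_le
    (norm_compContinuousLinearMap_le_exteriorNorm_mul f α) v

theorem exteriorNorm_comp_le (k : ℕ) (g : W →L[𝕜] X) (f : V →L[𝕜] W) :
    exteriorNorm k (g ∘L f) ≤ exteriorNorm k g * exteriorNorm k f := by
  rw [mul_comm]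
  exact ContinuousLinearMap.opNorm_comp_le
    (ContinuousAlternatingMap.compContinuousLinearMapCLM f :
      (W [⋀^Fin k]→L[𝕜] 𝕜) →L[𝕜] V [⋀^Fin k]→L[𝕜] 𝕜)
    (ContinuousAlternatingMap.compContinuousLinearMapCLM g)

theorem exteriorNorm_le_pow (k : ℕ) (f : V →L[𝕜] W) : exteriorNorm k f ≤ ‖f‖ ^ k := by
  refine ContinuousLinearMap.opNorm_le_bound _ (by positivity) fun α => ?_
  simpa [mul_comm] using α.norm_compContinuousLinearMap_le f

theorem continuous_exteriorNorm (k : ℕ) : Continuous (exteriorNorm k : (V →L[𝕜] W) → ℝ) := by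
  have := ContinuousAlternatingMap.continuous_compContinuousLinearMapCLM
    (ι := Fin k) (𝕜 := 𝕜) (E := V) (F := W) (G := 𝕜)
  exact this.norm

theorem exists_continuousAlternatingMap_apply_ne_zero [CompleteSpace 𝕜] [FiniteDimensional 𝕜 W]
    {w : Fin k → W} (hw : LinearIndependent 𝕜 w) : ∃ α : W [⋀^Fin k]→L[𝕜] 𝕜, α w ≠ 0 := by
  obtain ⟨ℓ, hℓ⟩ := (Fintype.linearCombination 𝕜 w).exists_leftInverse_of_injective
    (LinearMap.ker_eq_bot.2 hw.fintypeLinearCombination_injective)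
  have hℓw : ∀ i, ℓ (w i) = Pi.single i 1 := fun i => by
    simpa using LinearMap.congr_fun hℓ (Pi.single i 1)
  refine ⟨{ Matrix.detRowAlternating.compLinearMap ℓ with cont := ?_ }, ?_⟩
  · change Continuous fun v : Fin k → W => Matrix.det (Matrix.of fun i => ℓ (v i))
    have := ℓ.continuous_of_finiteDimensional
    fun_prop
  · change Matrix.det (Matrix.of fun i => ℓ (w i)) ≠ 0
    have : Matrix.of (fun i => ℓ (w i)) = (1 : Matrix (Fin k) (Fin k) 𝕜) := by
      ext i j
      simp [hℓw, Matrix.one_apply, Pi.single_apply, eq_comm]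
    simp [this]

theorem exteriorNorm_pos [CompleteSpace 𝕜] [FiniteDimensional 𝕜 W] {f : V →L[𝕜] W}
    (hf : Function.Injective f) (hk : k ≤ Module.finrank 𝕜 V) : 0 < exteriorNorm k f := by
  obtain ⟨v, hv⟩ := exists_linearIndependent_of_le_finrank hk
  obtain ⟨α, hα⟩ := exists_continuousAlternatingMap_apply_ne_zero
    (hv.map' (f : V →ₗ[𝕜] W) (LinearMap.ker_eq_bot.2 hf))
  refine (exteriorNorm_nonneg k f).lt_of_ne fun h => hα ?_
  simpa [← h] using norm_apply_comp_le_exteriorNorm_mul f α v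

/-- Up to the scale `α x`, the coordinates with respect to `x` given by Cramer's rule. -/
noncomputable def cramerMap {ι : Type*} [DecidableEq ι] (α : W [⋀^ι]→L[𝕜] 𝕜) (x : ι → W) :
    W →L[𝕜] ι → 𝕜 :=
  .pi fun i => α.toContinuousLinearMap x i

theorem cramerMap_apply {ι : Type*} [DecidableEq ι] (α : W [⋀^ι]→L[𝕜] 𝕜) (x : ι → W) (y : W)
    (i : ι) : cramerMap α x y i = α (Function.update x i y) :=
  rfl

theorem cramerMap_apply_self {ι : Type*} [DecidableEq ι] (α : W [⋀^ι]→L[𝕜] 𝕜) (x : ι → W)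
    (j : ι) : cramerMap α x (x j) = Pi.single j (α x) := by
  ext i
  rcases eq_or_ne i j with rfl | hij
  · simp [cramerMap_apply]
  · rw [cramerMap_apply, Pi.single_eq_of_ne hij]
    exact α.map_eq_zero_of_eq _ (by simp [hij.symm]) hij

theorem cramerMap_sum_smul {ι : Type*} [Fintype ι] [DecidableEq ι] {α : W [⋀^ι]→L[𝕜] 𝕜}
    {x : ι → W} (h0 : α x ≠ 0) (c : ι → 𝕜) :
    cramerMap α x (∑ i, ((α x)⁻¹ * c i) • x i) = c := by
  ext j
  simp [cramerMap_apply_self, Pi.single_apply, mul_right_comm _ (c _), inv_mul_cancel₀ h0]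

theorem norm_cramerMap_apply_le (f : V →L[𝕜] W) (α : W [⋀^Fin (k + 1)]→L[𝕜] 𝕜)
    {v : Fin (k + 1) → V} (hv : ∀ i, ‖v i‖ ≤ 1) (y : W) (i : Fin (k + 1)) :
    ‖cramerMap α (f ∘ v) y i‖ ≤ exteriorNorm k f * ‖α‖ * ‖y‖ := by
  have hα : cramerMap α (f ∘ v) y i = (-1) ^ (i : ℕ) • α.curryLeft y (f ∘ i.removeNth v) := by
    rw [cramerMap_apply, ← Fin.insertNth_removeNth, α.map_insertNth]
    rfl
  calc ‖cramerMap α (f ∘ v) y i‖ = ‖α.curryLeft y (f ∘ i.removeNth v)‖ := by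
        rcases neg_one_pow_eq_or ℤ (i : ℕ) with h | h <;> simp [hα, h]
    _ ≤ exteriorNorm k f * ‖α.curryLeft y‖ * ∏ j, ‖i.removeNth v j‖ :=
        norm_apply_comp_le_exteriorNorm_mul _ _ _
    _ ≤ exteriorNorm k f * (‖α‖ * ‖y‖) * 1 := by
        have := exteriorNorm_nonneg k f
        gcongr
        · simpa using α.curryLeft.le_opNorm y
        · exact Finset.prod_le_one (fun j _ => norm_nonneg _) fun j _ => hv _
    _ = _ := by ring

theorem apply_vecCons_alternatizeUncurryFin_smulRight {α : W [⋀^Fin (k + 1)]→L[𝕜] 𝕜}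
    {x : Fin (k + 1) → W} {y : W} (hy : cramerMap α x y = 0) (φ : W →L[𝕜] 𝕜) :
    ContinuousAlternatingMap.alternatizeUncurryFin (φ.smulRight α) (Matrix.vecCons y x) =
      φ y * α x := by
  have hα : ∀ j : Fin (k + 1), α (j.succ.removeNth (Matrix.vecCons y x)) = 0 := fun j => by
    have := congr_fun hy j
    rw [cramerMap_apply, ← Fin.insertNth_removeNth, α.map_insertNth] at this
    have hcons : j.succ.removeNth (Matrix.vecCons y x) = Matrix.vecCons y (j.removeNth x) :=
      Fin.cons_comp_succ_succAbove y x j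
    simpa [hcons] using this
  rw [ContinuousAlternatingMap.alternatizeUncurryFin_apply, Fin.sum_univ_succ]
  simp [hα]

theorem norm_mul_norm_sum_smul_le {ι : Type*} [Fintype ι] {a : 𝕜} (ha : a ≠ 0) {v : ι → V}
    (hv : ∀ i, ‖v i‖ ≤ 1) {c : ι → 𝕜} {K : ℝ} (hc : ∀ i, ‖c i‖ ≤ K) :
    ‖a‖ * ‖∑ i, (a⁻¹ * c i) • v i‖ ≤ Fintype.card ι * K := by
  rw [← norm_smul, Finset.smul_sum]
  refine (norm_sum_le_of_le _ fun i _ => (?_ : _ ≤ K)).trans_eq (by simp)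
  rw [smul_smul, mul_inv_cancel_left₀ ha, norm_smul]
  exact (mul_le_of_le_one_right (norm_nonneg _) (hv i)).trans (hc i)

end ExteriorNorm

section ExteriorNormRCLike

variable {𝕜 V W : Type*} [RCLike 𝕜] [NormedAddCommGroup V] [NormedSpace 𝕜 V]
  [NormedAddCommGroup W] [NormedSpace 𝕜 W] {k : ℕ}

theorem exteriorNorm_one (f : V →L[𝕜] W) : exteriorNorm 1 f = ‖f‖ := by
  refine le_antisymm (by simpa using exteriorNorm_le_pow 1 f) ?_
  refine f.opNorm_le_bound (exteriorNorm_nonneg 1 f) fun v => ?_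
  refine NormedSpace.norm_le_dual_bound 𝕜 _ (by positivity [exteriorNorm_nonneg 1 f]) fun φ => ?_
  have := norm_apply_comp_le_exteriorNorm_mul f
    (ContinuousAlternatingMap.ofSubsingleton 𝕜 W 𝕜 (0 : Fin 1) φ) ![v]
  simp only [ContinuousAlternatingMap.ofSubsingleton_apply_apply, Function.comp_apply,
    Matrix.cons_val_fin_one, ContinuousAlternatingMap.norm_ofSubsingleton, Finset.univ_unique,
    Finset.prod_const, Finset.card_singleton, pow_one] at this
  linarith

theorem norm_mul_norm_le_of_cramerMap_eq_zero {α : W [⋀^Fin (k + 1)]→L[𝕜] 𝕜} (f : V →L[𝕜] W)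
    {v : Fin (k + 1) → V} (hv : ∀ i, ‖v i‖ ≤ 1) {e : V} (he : cramerMap α (f ∘ v) (f e) = 0) :
    ‖α (f ∘ v)‖ * ‖f e‖ ≤ (k + 2) * exteriorNorm (k + 2) f * ‖α‖ * ‖e‖ := by
  have hpos := exteriorNorm_nonneg (k + 2) f
  rw [← norm_smul]
  refine NormedSpace.norm_le_dual_bound 𝕜 _ (by positivity) fun φ => ?_
  let β := ContinuousAlternatingMap.alternatizeUncurryFin (φ.smulRight α)
  have hβ : ‖β‖ ≤ (k + 2) * (‖φ‖ * ‖α‖) := by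
    refine (ContinuousAlternatingMap.norm_alternatizeUncurryFin_le _).trans_eq ?_
    rw [ContinuousLinearMap.norm_smulRight_apply]
    push_cast
    ring
  have hcons : Matrix.vecCons (f e) (f ∘ v) = f ∘ Matrix.vecCons e v := by
    ext i
    refine Fin.cases rfl (fun j => rfl) i
  calc ‖φ (α (f ∘ v) • f e)‖ = ‖β (f ∘ Matrix.vecCons e v)‖ := by
        rw [← hcons, apply_vecCons_alternatizeUncurryFin_smulRight he, map_smul, smul_eq_mul,
          mul_comm]
    _ ≤ exteriorNorm (k + 2) f * ‖β‖ * ∏ i, ‖Matrix.vecCons e v i‖ :=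
        norm_apply_comp_le_exteriorNorm_mul _ _ _
    _ ≤ exteriorNorm (k + 2) f * ((k + 2) * (‖φ‖ * ‖α‖)) * (‖e‖ * 1) := by
        rw [Fin.prod_univ_succ]
        gcongr
        · exact le_rfl
        · exact Finset.prod_le_one (fun j _ => norm_nonneg _) fun j _ => hv _
    _ = _ := by ring

theorem exists_norm_le_one_lt_norm_apply {ι : Type*} [Fintype ι]
    {α : V [⋀^ι]→L[𝕜] 𝕜} {c : ℝ} (hc : 0 ≤ c) (h : c < ‖α‖) :
    ∃ v : ι → V, (∀ i, ‖v i‖ ≤ 1) ∧ c < ‖α v‖ := by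
  by_contra! hle
  refine h.not_ge (α.opNorm_le_bound hc fun v => ?_)
  let u : ι → V := fun i => ((‖v i‖⁻¹ : ℝ) : 𝕜) • v i
  have hu : ∀ i, ‖u i‖ ≤ 1 := fun i => by
    simpa [u, norm_smul] using inv_mul_le_one
  have hv : v = fun i => (‖v i‖ : 𝕜) • u i := by
    ext i
    rcases eq_or_ne (v i) 0 with h0 | h0
    · simp [u, h0]
    · simp [u, smul_smul, h0]
  calc ‖α v‖ = ‖α u‖ * ∏ i, ‖v i‖ := by
        conv_lhs => rw [hv, α.map_smul_univ]
        simp [mul_comm]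
    _ ≤ c * ∏ i, ‖v i‖ := by
        gcongr
        exact hle u hu

theorem exists_half_exteriorNorm_lt_norm_apply {f : V →L[𝕜] W} (hf : 0 < exteriorNorm k f) :
    ∃ (α : W [⋀^Fin k]→L[𝕜] 𝕜) (v : Fin k → V), ‖α‖ ≤ 1 ∧ (∀ i, ‖v i‖ ≤ 1) ∧
      exteriorNorm k f / 2 < ‖α (f ∘ v)‖ := by
  obtain ⟨α, hα, hlt⟩ := ContinuousLinearMap.exists_lt_apply_of_lt_opNorm _ (half_lt_self hf)
  obtain ⟨v, hv, hlt⟩ :=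
    exists_norm_le_one_lt_norm_apply (half_pos hf).le hlt
  exact ⟨α, v, hα.le, hv, hlt⟩

/-- Choose a form and `k + 1` vectors nearly attaining the norm of the `k + 1`-st exterior power;
the subspace consists of the vectors whose images have vanishing Cramer coordinates. -/
theorem exists_slow_subspace [FiniteDimensional 𝕜 V] {f : V →L[𝕜] W}
    (hf : 0 < exteriorNorm (k + 1) f) :
    ∃ E : Submodule 𝕜 V, Module.finrank 𝕜 E + (k + 1) = Module.finrank 𝕜 V ∧
      (∀ e ∈ E, exteriorNorm (k + 1) f * ‖f e‖ ≤ 2 * (k + 2) * exteriorNorm (k + 2) f * ‖e‖) ∧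
      ∀ u, ∃ e ∈ E, exteriorNorm (k + 1) f * ‖e - u‖ ≤ 2 * (k + 1) * exteriorNorm k f * ‖f u‖ := by
  obtain ⟨α, v, hα, hv, hlt⟩ := exists_half_exteriorNorm_lt_norm_apply hf
  have hpos : 0 < ‖α (f ∘ v)‖ := (half_pos hf).trans hlt
  have hk := exteriorNorm_nonneg k f
  have hk' := exteriorNorm_nonneg (k + 2) f
  let L : V →ₗ[𝕜] Fin (k + 1) → 𝕜 := cramerMap α (f ∘ v) ∘L f
  let s : (Fin (k + 1) → 𝕜) → V := fun c => ∑ i, ((α (f ∘ v))⁻¹ * c i) • v i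
  have hLs : ∀ c, L (s c) = c := fun c => by
    simpa [L, s, map_sum] using cramerMap_sum_smul (norm_pos_iff.1 hpos) c
  refine ⟨L.ker, ?_, fun e he => ?_, fun u => ⟨u - s (L u), by simp [hLs], ?_⟩⟩
  · rw [← L.finrank_range_add_finrank_ker, L.range_eq_top.2 fun c => ⟨s c, hLs c⟩]
    simp [add_comm]
  · have hsmall := norm_mul_norm_le_of_cramerMap_eq_zero f hv he
    have hα' : (k + 2) * exteriorNorm (k + 2) f * ‖α‖ * ‖e‖ ≤
        (k + 2) * exteriorNorm (k + 2) f * 1 * ‖e‖ := by gcongr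
    linarith [mul_le_mul_of_nonneg_right hlt.le (norm_nonneg (f e))]
  · have hLu : ∀ i, ‖L u i‖ ≤ exteriorNorm k f * 1 * ‖f u‖ := fun i =>
      (norm_cramerMap_apply_le f α hv (f u) i).trans (by gcongr)
    have hclose : ‖α (f ∘ v)‖ * ‖s (L u)‖ ≤ (k + 1) * (exteriorNorm k f * 1 * ‖f u‖) := by
      simpa using norm_mul_norm_sum_smul_le (norm_pos_iff.1 hpos) hv hLu
    rw [sub_sub_cancel_left, norm_neg]
    linarith [mul_le_mul_of_nonneg_right hlt.le (norm_nonneg (s (L u)))]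

end ExteriorNormRCLike

section AlmostInvariant

variable {V : Type*} [NormedAddCommGroup V] {w : ℕ → V} {ρ : ℝ}

theorem norm_le_two_mul_of_norm_sub_le_geometric_mul (hρ : 0 < ρ) (hρ1 : ρ < 1)
    (hw : ∀ n, ‖w (n + 1) - w n‖ ≤ (1 - ρ) / 4 * ρ ^ n * ‖w n‖) (n : ℕ) :
    ‖w n‖ ≤ 2 * ‖w 0‖ := by
  suffices h : ‖w n‖ ≤ (2 - ρ ^ n) * ‖w 0‖ from
    h.trans (by gcongr; linarith [pow_pos hρ n])
  induction n with
  | zero => norm_num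
  | succ n ih =>
    have htri : ‖w (n + 1)‖ ≤ ‖w (n + 1) - w n‖ + ‖w n‖ := by
      simpa using norm_add_le (w (n + 1) - w n) (w n)
    have hstep : ‖w (n + 1) - w n‖ ≤ (1 - ρ) * ρ ^ n * ‖w 0‖ := by
      calc ‖w (n + 1) - w n‖ ≤ (1 - ρ) / 4 * ρ ^ n * ‖w n‖ := hw n
        _ ≤ (1 - ρ) / 4 * ρ ^ n * (4 * ‖w 0‖) := by
            have : 0 ≤ (1 - ρ) / 4 := by linarith
            gcongr
            nlinarith [pow_pos hρ n, norm_nonneg (w 0)]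
        _ = (1 - ρ) * ρ ^ n * ‖w 0‖ := by ring
    linear_combination htri + hstep + ih

theorem exists_norm_sub_le_of_norm_sub_le_geometric_mul [CompleteSpace V] (hρ : 0 < ρ)
    (hρ1 : ρ < 1) (hw : ∀ n, ‖w (n + 1) - w n‖ ≤ (1 - ρ) / 4 * ρ ^ n * ‖w n‖) :
    ∃ a, ∀ n, ‖a - w n‖ ≤ ‖w 0‖ / 2 * ρ ^ n := by
  have hρ0 : 0 < 1 - ρ := sub_pos.2 hρ1
  have hdist : ∀ n, dist (w n) (w (n + 1)) ≤ ‖w 0‖ / 2 * (1 - ρ) * ρ ^ n := fun n => by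
    rw [dist_eq_norm, norm_sub_rev]
    calc ‖w (n + 1) - w n‖ ≤ (1 - ρ) / 4 * ρ ^ n * ‖w n‖ := hw n
      _ ≤ (1 - ρ) / 4 * ρ ^ n * (2 * ‖w 0‖) := by
          gcongr
          exact norm_le_two_mul_of_norm_sub_le_geometric_mul hρ hρ1 hw n
      _ = ‖w 0‖ / 2 * (1 - ρ) * ρ ^ n := by ring
  obtain ⟨a, ha⟩ := cauchySeq_tendsto_of_complete (cauchySeq_of_le_geometric ρ _ hρ1 hdist)
  refine ⟨a, fun n => ?_⟩
  rw [norm_sub_rev, ← dist_eq_norm]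
  refine (dist_le_of_le_geometric_of_tendsto ρ _ hρ1 hdist ha n).trans_eq ?_
  field_simp

/-- The threshold `M` is chosen so large that the total relative correction of a selected sequence
`w n ∈ E (M + n)` is below `1`, so that its limit cannot vanish. -/
theorem exists_ne_zero_limit_of_almost_invariant [CompleteSpace V] {E : ℕ → Set V} {C : ℝ}
    (hρ : 0 < ρ) (hρ1 : ρ < 1)
    (hstep : ∀ᶠ n in atTop, ∀ u ∈ E n, ∃ w ∈ E (n + 1), ‖w - u‖ ≤ C * ρ ^ n * ‖u‖)
    (hne : ∀ n, ∃ u ∈ E n, u ≠ 0) :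
    ∃ u : V, u ≠ 0 ∧ ∃ K : ℝ, ∀ᶠ n in atTop, ∃ w ∈ E n, ‖w‖ ≤ K ∧ ‖u - w‖ ≤ K * ρ ^ n := by
  have hC : ∀ᶠ n : ℕ in atTop, C * ρ ^ n ≤ (1 - ρ) / 4 := by
    have := (tendsto_pow_atTop_nhds_zero_of_lt_one hρ.le hρ1).const_mul C
    exact this.eventually_le_const (by linarith)
  obtain ⟨M, hM⟩ := eventually_atTop.1 (hC.and hstep)
  choose f hfE hf using fun n (u : E (M + n)) => (hM (M + n) (by omega)).2 u u.2
  obtain ⟨u₀, hu₀, hne₀⟩ := hne M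
  let v : ∀ n, E (M + n) := fun n => Nat.rec ⟨u₀, hu₀⟩ (fun n u => ⟨f n u, hfE n u⟩) n
  let w : ℕ → V := fun n => (v n).1
  have hw : ∀ n, ‖w (n + 1) - w n‖ ≤ (1 - ρ) / 4 * ρ ^ n * ‖w n‖ := fun n => by
    refine (hf n (v n)).trans ?_
    rw [pow_add, ← mul_assoc]
    gcongr
    exact (hM M le_rfl).1
  obtain ⟨u, hu⟩ := exists_norm_sub_le_of_norm_sub_le_geometric_mul hρ hρ1 hw
  refine ⟨u, ?_, 2 * ‖w 0‖ + ‖w 0‖ / 2 / ρ ^ M, ?_⟩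
  · rintro rfl
    have h0 : ‖w 0‖ ≤ ‖w 0‖ / 2 := by simpa using hu 0
    exact hne₀ (norm_le_zero_iff.1 (by linarith : ‖w 0‖ ≤ 0))
  · filter_upwards [eventually_ge_atTop M] with n hn
    obtain ⟨m, rfl⟩ := Nat.exists_eq_add_of_le hn
    refine ⟨w m, (v m).2, ?_, (hu m).trans ?_⟩
    · refine (norm_le_two_mul_of_norm_sub_le_geometric_mul hρ hρ1 hw m).trans ?_
      exact le_add_of_nonneg_right (by positivity)
    · calc ‖w 0‖ / 2 * ρ ^ m = ‖w 0‖ / 2 / ρ ^ M * ρ ^ (M + m) := by rw [pow_add]; field_simp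
        _ ≤ (2 * ‖w 0‖ + ‖w 0‖ / 2 / ρ ^ M) * ρ ^ (M + m) := by
            gcongr
            exact le_add_of_nonneg_left (by positivity)

end AlmostInvariant

section UniformGrowth

variable {𝕜 V W : Type*} [NontriviallyNormedField 𝕜] [NormedAddCommGroup V] [NormedSpace 𝕜 V]
  [NormedAddCommGroup W] [NormedSpace 𝕜 W] {B : ℕ → V →L[𝕜] W}

/-- All nonzero vectors grow at the exponential rate `l` under the sequence of operators `B`,
uniformly on every sphere centred at the origin. -/
def HasUniformExpRate (B : ℕ → V →L[𝕜] W) (l : EReal) : Prop :=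
  ∀ r > 0, Tendsto (fun p : ℕ × V => ((Real.log ‖B p.1 p.2‖ / p.1 : ℝ) : EReal))
    (atTop ×ˢ 𝓟 (Metric.sphere 0 r)) (𝓝 l)

theorem HasUniformExpRate.tendsto {l : EReal} (h : HasUniformExpRate B l) {v : V} (hv : v ≠ 0) :
    Tendsto (fun n : ℕ => ((Real.log ‖B n v‖ / n : ℝ) : EReal)) atTop (𝓝 l) := by
  have hsphere : Tendsto (fun n : ℕ => (n, v)) atTop (atTop ×ˢ 𝓟 (Metric.sphere 0 ‖v‖)) :=
    tendsto_id.prodMk (tendsto_principal.2 (.of_forall fun _ => by simp))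
  exact ((h ‖v‖ (norm_pos_iff.2 hv)).comp hsphere :)

theorem HasUniformExpRate.eventually_forall_norm_eq_one {l : EReal} (h : HasUniformExpRate B l)
    {U : Set EReal} (hU : U ∈ 𝓝 l) :
    ∀ᶠ n : ℕ in atTop, ∀ v : V, ‖v‖ = 1 → ((Real.log ‖B n v‖ / n : ℝ) : EReal) ∈ U := by
  simpa using eventually_prod_principal_iff.1 (h 1 one_pos hU)

theorem hasUniformExpRate_of_eventually_exp_mul_norm_le {l : EReal}
    (hB : HasExpRate (fun n => ‖B n‖) l) (hinj : ∀ n, Function.Injective (B n))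
    (hlow : ∀ q : ℝ, q < l → ∀ᶠ n : ℕ in atTop, ∀ v, Real.exp (q * n) * ‖v‖ ≤ ‖B n v‖) :
    HasUniformExpRate B l := by
  intro r hr
  have hpos : ∀ n, ∀ v ∈ Metric.sphere (0 : V) r, 0 < ‖B n v‖ := fun n v hv =>
    norm_pos_iff.2 ((map_ne_zero_iff _ (hinj n)).2 (ne_zero_of_mem_sphere hr.ne' ⟨v, hv⟩))
  refine tendsto_coe_div_of_forall_rat tendsto_fst (fun q hq => ?_) fun q hq => ?_ <;>
    rw [eventually_prod_principal_iff]
  · obtain ⟨s, hls, hsq⟩ := EReal.lt_iff_exists_real_btwn.1 hq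
    filter_upwards [hB.eventually_le_exp hls,
      eventually_mul_exp_le_exp (EReal.coe_lt_coe_iff.1 hsq) r] with n hn hr v hv
    rw [Real.log_le_iff_le_exp (hpos n v hv)]
    rw [mem_sphere_zero_iff_norm] at hv
    calc ‖B n v‖ ≤ Real.exp (s * n) * r := (B n).le_of_opNorm_le_of_le hn hv.le
      _ ≤ Real.exp (q * n) := by rwa [mul_comm]
  · obtain ⟨s, hqs, hsl⟩ := EReal.lt_iff_exists_real_btwn.1 hq
    filter_upwards [hlow s hsl, eventually_mul_exp_le_exp (EReal.coe_lt_coe_iff.1 hqs) r⁻¹]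
      with n hn hrs v hv
    rw [Real.le_log_iff_exp_le (hpos n v hv)]
    rw [mem_sphere_zero_iff_norm] at hv
    calc Real.exp (q * n) ≤ Real.exp (s * n) * r := by rwa [← inv_mul_le_iff₀' hr]
      _ ≤ ‖B n v‖ := hv ▸ hn v

theorem eventually_exteriorNorm_le_exp_mul_exteriorNorm_succ {k : ℕ} {l : ℝ} {L : EReal}
    (hB : HasExpRate (fun n => ‖B n‖) l) (hL : HasExpRate (fun n => exteriorNorm (k + 1) (B n)) L)
    (hlL : (((k + 1 : ℕ) * l : ℝ) : EReal) ≤ L) {ε : ℝ} (hε : 0 < ε) :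
    ∀ᶠ n : ℕ in atTop,
      exteriorNorm k (B n) ≤ Real.exp ((-l + ε) * n) * exteriorNorm (k + 1) (B n) := by
  obtain ⟨δ, hδ, hδε⟩ : ∃ δ > 0, k * δ + δ = ε :=
    ⟨ε / (k + 1), by positivity, by field_simp⟩
  have hsucc : (((k + 1 : ℕ) * l - δ : ℝ) : EReal) < L :=
    (EReal.coe_lt_coe_iff.2 (sub_lt_self _ hδ)).trans_le hlL
  have hone : (l : EReal) < ((l + δ : ℝ) : EReal) := EReal.coe_lt_coe_iff.2 (by linarith)
  filter_upwards [hB.eventually_le_exp hone, hL.eventually_exp_le hsucc] with n hn hLn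
  calc exteriorNorm k (B n) ≤ ‖B n‖ ^ k := exteriorNorm_le_pow k (B n)
    _ ≤ Real.exp ((l + δ) * n) ^ k := by gcongr
    _ = Real.exp ((-l + ε) * n) * Real.exp (((k + 1 : ℕ) * l - δ) * n) := by
        rw [← Real.exp_nat_mul, ← Real.exp_add, ← hδε]
        push_cast
        ring_nf
    _ ≤ Real.exp ((-l + ε) * n) * exteriorNorm (k + 1) (B n) := by gcongr

end UniformGrowth

section TopExteriorPower

variable {𝕜 V W : Type*} [RCLike 𝕜] [NormedAddCommGroup V] [NormedSpace 𝕜 V]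
  [FiniteDimensional 𝕜 V] [NormedAddCommGroup W] [NormedSpace 𝕜 W] {B : ℕ → V →L[𝕜] W} {k : ℕ}

theorem exteriorNorm_succ_mul_norm_le_of_finrank_eq
    (hV : Module.finrank 𝕜 V = k + 1) (f : V →L[𝕜] W) (v : V) :
    exteriorNorm (k + 1) f * ‖v‖ ≤ 2 * (k + 1) * exteriorNorm k f * ‖f v‖ := by
  rcases (exteriorNorm_nonneg (k + 1) f).eq_or_lt with h0 | hpos
  · rw [← h0, zero_mul]
    positivity [exteriorNorm_nonneg k f]
  obtain ⟨E, hE, -, hnear⟩ := exists_slow_subspace hpos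
  obtain rfl : E = ⊥ := Submodule.finrank_eq_zero.1 (by omega)
  obtain ⟨e, he, hev⟩ := hnear v
  rwa [(Submodule.mem_bot 𝕜).1 he, zero_sub, norm_neg] at hev

theorem injective_of_exteriorNorm_succ_pos
    (hV : Module.finrank 𝕜 V = k + 1) {f : V →L[𝕜] W} (hf : 0 < exteriorNorm (k + 1) f) :
    Function.Injective f := by
  refine (injective_iff_map_eq_zero f).2 fun v hv => ?_
  have := exteriorNorm_succ_mul_norm_le_of_finrank_eq hV f v
  rw [hv, norm_zero, mul_zero] at this
  exact norm_le_zero_iff.1 (nonpos_of_mul_nonpos_right this hf)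

theorem hasUniformExpRate_of_le_exteriorNorm_rate
    (hV : Module.finrank 𝕜 V = k + 1) {l : ℝ} {L : EReal} (hB : HasExpRate (fun n => ‖B n‖) l)
    (hL : HasExpRate (fun n => exteriorNorm (k + 1) (B n)) L)
    (hlL : (((k + 1 : ℕ) * l : ℝ) : EReal) ≤ L) : HasUniformExpRate B l := by
  refine hasUniformExpRate_of_eventually_exp_mul_norm_le hB
    (fun n => injective_of_exteriorNorm_succ_pos hV (hL.pos n)) fun q hq => ?_
  rw [EReal.coe_lt_coe_iff] at hq
  obtain ⟨ε, hε, hqε⟩ : ∃ ε > 0, q - l + ε < 0 := ⟨(l - q) / 2, by linarith, by linarith⟩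
  filter_upwards [eventually_exteriorNorm_le_exp_mul_exteriorNorm_succ hB hL hlL hε,
    eventually_mul_exp_le_exp hqε (2 * (k + 1))] with n hratio hexp v
  refine le_of_mul_le_mul_left ?_ (hL.pos n)
  calc exteriorNorm (k + 1) (B n) * (Real.exp (q * n) * ‖v‖)
      = Real.exp (q * n) * (exteriorNorm (k + 1) (B n) * ‖v‖) := by ring
    _ ≤ Real.exp (q * n) * (2 * (k + 1) *
          (Real.exp ((-l + ε) * n) * exteriorNorm (k + 1) (B n)) * ‖B n v‖) := by
        refine mul_le_mul_of_nonneg_left ?_ (Real.exp_pos _).le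
        exact (exteriorNorm_succ_mul_norm_le_of_finrank_eq hV (B n) v).trans (by gcongr)
    _ = 2 * (k + 1) * Real.exp ((q - l + ε) * n) * (exteriorNorm (k + 1) (B n) * ‖B n v‖) := by
        rw [show q - l + ε = q + (-l + ε) by ring, add_mul q, Real.exp_add]
        ring
    _ ≤ 1 * (exteriorNorm (k + 1) (B n) * ‖B n v‖) := by
        have := (hL.pos n).le
        gcongr
        simpa using hexp
    _ = exteriorNorm (k + 1) (B n) * ‖B n v‖ := one_mul _

end TopExteriorPower

section SlowSubspace

variable {𝕜 V W : Type*} [NontriviallyNormedField 𝕜] [NormedAddCommGroup V] [NormedSpace 𝕜 V]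
  [NormedAddCommGroup W] [NormedSpace 𝕜 W] {B : ℕ → V →L[𝕜] W} {c : ℝ} {v : V}

/-- The vectors whose images under the operators `B n` grow at most like `exp (c * n)`. -/
def slowSubspace (B : ℕ → V →L[𝕜] W) (c : ℝ) : Submodule 𝕜 V where
  carrier := {v | (fun n => B n v) =O[atTop] fun n : ℕ => Real.exp (c * n)}
  add_mem' hv hw := by simpa using hv.add hw
  zero_mem' := by simpa using Asymptotics.isBigO_zero _ _
  smul_mem' a v hv := by simpa [Pi.smul_def] using hv.const_smul_left a

theorem mem_slowSubspace :
    v ∈ slowSubspace B c ↔ (fun n => B n v) =O[atTop] fun n : ℕ => Real.exp (c * n) :=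
  Iff.rfl

theorem mem_slowSubspace_iff_exists_nat :
    v ∈ slowSubspace B c ↔ ∃ K N : ℕ, ∀ n ≥ N, ‖B n v‖ ≤ K * Real.exp (c * n) := by
  simp only [mem_slowSubspace, Asymptotics.isBigO_iff, eventually_atTop, Real.norm_eq_abs,
    Real.abs_exp]
  constructor
  · rintro ⟨K, N, hK⟩
    obtain ⟨m, hm⟩ := exists_nat_ge K
    exact ⟨m, N, fun n hn => (hK n hn).trans (by gcongr)⟩
  · rintro ⟨K, N, hK⟩
    exact ⟨K, N, hK⟩

theorem slowSubspace_add_one (B : ℕ → V →L[𝕜] W) (c : ℝ) :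
    slowSubspace (fun n => B (n + 1)) c = slowSubspace B c := by
  ext v
  let g : ℕ → ℝ := fun n => Real.exp (c * n)
  have hg : (fun n => Real.exp c * g n) = g ∘ (· + 1) := by
    funext n
    simp only [g, Function.comp_apply, Nat.cast_add, Nat.cast_one, ← Real.exp_add]
    ring_nf
  calc (fun n => B (n + 1) v) =O[atTop] g
      ↔ (fun n => B (n + 1) v) =O[atTop] fun n => Real.exp c * g n :=
        (Asymptotics.isBigO_const_mul_right_iff (Real.exp_pos c).ne').symm
    _ ↔ (fun n => B n v) =O[map (· + 1) atTop] g := by rw [hg, Asymptotics.isBigO_map]; rfl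
    _ ↔ (fun n => B n v) =O[atTop] g := by rw [map_add_atTop_eq_nat]

theorem comap_slowSubspace {X : Type*} [NormedAddCommGroup X] [NormedSpace 𝕜 X] (f : X →L[𝕜] V)
    (B : ℕ → V →L[𝕜] W) (c : ℝ) :
    (slowSubspace B c).comap f.toLinearMap = slowSubspace (fun n => B n ∘L f) c :=
  rfl

theorem measurableSet_mem_slowSubspace {Ω : Type*} [MeasurableSpace Ω]
    [MeasurableSpace V] [BorelSpace V] [SecondCountableTopologyEither (V →L[𝕜] W) V]
    [MeasurableSpace W] [BorelSpace W]
    {B : Ω → ℕ → V →L[𝕜] W} (hB : ∀ n, Measurable fun ω => B ω n) (c : ℝ) :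
    MeasurableSet {p : Ω × V | p.2 ∈ slowSubspace (B p.1) c} := by
  have hnorm : ∀ n, Measurable fun p : Ω × V => ‖B p.1 n p.2‖ := fun n =>
    (ContinuousLinearMap.measurable_apply₂.comp
      (((hB n).comp measurable_fst).prodMk measurable_snd)).norm
  simp only [mem_slowSubspace_iff_exists_nat, ge_iff_le, Set.ofPred_exists, Set.ofPred_forall]
  exact .iUnion fun K => .iUnion fun N => .iInter fun n => .iInter fun _ =>
    measurableSet_le (hnorm n) measurable_const

end SlowSubspace

section SlowSubspaceNontrivial

variable {𝕜 V W : Type*} [RCLike 𝕜] [NormedAddCommGroup V] [NormedSpace 𝕜 V]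
  [NormedAddCommGroup W] [NormedSpace 𝕜 W] {B : ℕ → V →L[𝕜] W} {c : ℝ}

/-- By the uniform boundedness principle, if all vectors are slow, then so is the norm. -/
theorem slowSubspace_ne_top [CompleteSpace V] {l : EReal} (hB : HasExpRate (fun n => ‖B n‖) l)
    (hcl : c < l) : slowSubspace B c ≠ ⊤ := by
  intro htop
  obtain ⟨K, hK⟩ : ∃ K, ∀ n : ℕ, ‖((Real.exp (-(c * n)) : ℝ) : 𝕜) • B n‖ ≤ K := by
    refine banach_steinhaus fun v => ?_
    obtain ⟨K, -, hK⟩ := Asymptotics.bound_of_isBigO_nat_atTop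
      (mem_slowSubspace.1 (htop ▸ Submodule.mem_top : v ∈ slowSubspace B c))
    refine ⟨K, fun n => ?_⟩
    have := hK (Real.exp_pos (c * n)).ne'
    rw [Real.norm_eq_abs, Real.abs_exp] at this
    simpa [norm_smul, Real.exp_neg, inv_mul_le_iff₀ (Real.exp_pos _), mul_comm] using this
  obtain ⟨q, hcq, hql⟩ := EReal.lt_iff_exists_real_btwn.1 hcl
  obtain ⟨n, hexp, hlow⟩ := ((eventually_mul_exp_le_exp (EReal.coe_lt_coe_iff.1 hcq) (K + 1)).and
    (hB.eventually_exp_le hql)).exists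
  have hn := hK n
  simp only [norm_smul, RCLike.norm_ofReal, Real.abs_exp] at hn
  rw [Real.exp_neg, inv_mul_le_iff₀ (Real.exp_pos _)] at hn
  linarith [Real.exp_pos (c * n)]

theorem eventually_exists_norm_sub_le_of_slow {E : ℕ → Set V} {D : ℕ → W →L[𝕜] W}
    {C r s t : ℝ} (hC : 0 ≤ C) (hBD : ∀ n, B (n + 1) = D n ∘L B n)
    (hslow : ∀ᶠ n : ℕ in atTop, ∀ e ∈ E n, ‖B n e‖ ≤ C * Real.exp (r * n) * ‖e‖)
    (hnear : ∀ᶠ n : ℕ in atTop, ∀ u, ∃ e ∈ E n, ‖e - u‖ ≤ C * Real.exp (s * n) * ‖B n u‖)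
    (hD : ∀ᶠ n : ℕ in atTop, ‖D n‖ ≤ Real.exp (t * n)) :
    ∀ᶠ n in atTop, ∀ u ∈ E n, ∃ w ∈ E (n + 1),
      ‖w - u‖ ≤ C ^ 2 * Real.exp s * Real.exp (r + s + t) ^ n * ‖u‖ := by
  filter_upwards [hslow, (tendsto_add_atTop_nat 1).eventually hnear, hD]
    with n hslow_n hnear_n hDn u hu
  obtain ⟨w, hw, hwu⟩ := hnear_n u
  have hexp : Real.exp (s * (n + 1 : ℕ)) * Real.exp (t * n) * Real.exp (r * n) =
      Real.exp s * Real.exp (r + s + t) ^ n := by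
    rw [← Real.exp_nat_mul, ← Real.exp_add, ← Real.exp_add, ← Real.exp_add]
    push_cast
    ring_nf
  refine ⟨w, hw, ?_⟩
  calc ‖w - u‖ ≤ C * Real.exp (s * (n + 1 : ℕ)) * ‖D n (B n u)‖ := by simpa [hBD] using hwu
    _ ≤ C * Real.exp (s * (n + 1 : ℕ)) * (Real.exp (t * n) * (C * Real.exp (r * n) * ‖u‖)) := by
        gcongr
        exact (D n).le_of_opNorm_le_of_le hDn (hslow_n u hu)
    _ = C ^ 2 * (Real.exp (s * (n + 1 : ℕ)) * Real.exp (t * n) * Real.exp (r * n)) * ‖u‖ := by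
        ring
    _ = C ^ 2 * Real.exp s * Real.exp (r + s + t) ^ n * ‖u‖ := by rw [hexp, ← mul_assoc]

/-- Moving from `E n` to `E (n + 1)` changes vectors by an exponentially small amount, and a limit
of such moves is the required vector. -/
theorem exists_ne_zero_isBigO_exp [CompleteSpace V] {E : ℕ → Set V} {D : ℕ → W →L[𝕜] W}
    {C q r s t : ℝ} (hC : 0 ≤ C) (hBD : ∀ n, B (n + 1) = D n ∘L B n)
    (hne : ∀ n, ∃ e ∈ E n, e ≠ 0)
    (hslow : ∀ᶠ n : ℕ in atTop, ∀ e ∈ E n, ‖B n e‖ ≤ C * Real.exp (r * n) * ‖e‖)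
    (hnear : ∀ᶠ n : ℕ in atTop, ∀ u, ∃ e ∈ E n, ‖e - u‖ ≤ C * Real.exp (s * n) * ‖B n u‖)
    (hD : ∀ᶠ n : ℕ in atTop, ‖D n‖ ≤ Real.exp (t * n))
    (hB : ∀ᶠ n : ℕ in atTop, ‖B n‖ ≤ Real.exp (q * n))
    (hrst : r + s + t < 0) (hrc : r ≤ c) (hqc : q + (r + s + t) ≤ c) :
    ∃ u ≠ 0, (fun n => B n u) =O[atTop] fun n : ℕ => Real.exp (c * n) := by
  obtain ⟨u, hu, K, hK⟩ := exists_ne_zero_limit_of_almost_invariant (Real.exp_pos _)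
    (Real.exp_lt_one_iff.2 hrst) (eventually_exists_norm_sub_le_of_slow hC hBD hslow hnear hD) hne
  refine ⟨u, hu, .of_bound (C * K + K) ?_⟩
  filter_upwards [hK, hslow, hB] with n ⟨w, hw, hwK, huw⟩ hslow_n hBn
  have hK0 : 0 ≤ K := (norm_nonneg w).trans hwK
  rw [Real.norm_eq_abs, Real.abs_exp]
  calc ‖B n u‖ = ‖B n w + B n (u - w)‖ := by rw [← map_add, add_sub_cancel]
    _ ≤ C * Real.exp (r * n) * K + Real.exp (q * n) * (K * Real.exp (r + s + t) ^ n) := by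
        refine norm_add_le_of_le ((hslow_n w hw).trans (by gcongr)) ?_
        exact (B n).le_of_opNorm_le_of_le hBn huw
    _ = C * K * Real.exp (r * n) + K * Real.exp ((q + (r + s + t)) * n) := by
        rw [← Real.exp_nat_mul, mul_comm (n : ℝ), add_mul q, Real.exp_add (q * n)]
        ring
    _ ≤ C * K * Real.exp (c * n) + K * Real.exp (c * n) := by gcongr
    _ = (C * K + K) * Real.exp (c * n) := by ring

theorem exists_eventually_slow_subspaces [FiniteDimensional 𝕜 V] {k : ℕ} {r s : ℝ}
    (hpos : ∀ n, 0 < exteriorNorm (k + 1) (B n))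
    (hsucc : ∀ᶠ n : ℕ in atTop,
      exteriorNorm (k + 2) (B n) ≤ Real.exp (r * n) * exteriorNorm (k + 1) (B n))
    (hpred : ∀ᶠ n : ℕ in atTop,
      exteriorNorm k (B n) ≤ Real.exp (s * n) * exteriorNorm (k + 1) (B n)) :
    ∃ E : ℕ → Submodule 𝕜 V, (∀ n, Module.finrank 𝕜 (E n) + (k + 1) = Module.finrank 𝕜 V) ∧
      (∀ᶠ n : ℕ in atTop, ∀ e ∈ E n, ‖B n e‖ ≤ 2 * (k + 2) * Real.exp (r * n) * ‖e‖) ∧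
      ∀ᶠ n : ℕ in atTop, ∀ u, ∃ e ∈ E n,
        ‖e - u‖ ≤ 2 * (k + 2) * Real.exp (s * n) * ‖B n u‖ := by
  choose E hrank hslow hnear using fun n => exists_slow_subspace (hpos n)
  refine ⟨E, hrank, ?_, ?_⟩
  · filter_upwards [hsucc] with n hn e he
    refine le_of_mul_le_mul_left ((hslow n e he).trans ?_) (hpos n)
    calc 2 * (k + 2) * exteriorNorm (k + 2) (B n) * ‖e‖
        ≤ 2 * (k + 2) * (Real.exp (r * n) * exteriorNorm (k + 1) (B n)) * ‖e‖ := by gcongr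
      _ = exteriorNorm (k + 1) (B n) * (2 * (k + 2) * Real.exp (r * n) * ‖e‖) := by ring
  · filter_upwards [hpred] with n hn u
    obtain ⟨e, he, heu⟩ := hnear n u
    refine ⟨e, he, le_of_mul_le_mul_left (heu.trans ?_) (hpos n)⟩
    calc 2 * (k + 1) * exteriorNorm k (B n) * ‖B n u‖
        ≤ 2 * (k + 2) * (Real.exp (s * n) * exteriorNorm (k + 1) (B n)) * ‖B n u‖ := by
          have := exteriorNorm_nonneg k (B n)
          gcongr
          norm_num
      _ = exteriorNorm (k + 1) (B n) * (2 * (k + 2) * Real.exp (s * n) * ‖B n u‖) := by ring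

theorem slowSubspace_ne_bot [FiniteDimensional 𝕜 V] {k : ℕ} {D : ℕ → W →L[𝕜] W} {l ε : ℝ}
    {L M : EReal} (hk : k + 1 < Module.finrank 𝕜 V) (hε : 0 < ε)
    (hBD : ∀ n, B (n + 1) = D n ∘L B n) (hD : ∀ᶠ n : ℕ in atTop, ‖D n‖ ≤ Real.exp (ε * n))
    (hB : HasExpRate (fun n => ‖B n‖) l)
    (hL : HasExpRate (fun n => exteriorNorm (k + 1) (B n)) L)
    (hM : HasExpRate (fun n => exteriorNorm (k + 2) (B n)) M)
    (hlL : (((k + 1 : ℕ) * l : ℝ) : EReal) ≤ L)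
    (hMl : M < (((k + 2 : ℕ) * l - 5 * ε : ℝ) : EReal)) :
    slowSubspace B (l - ε) ≠ ⊥ := by
  have := FiniteDimensional.complete 𝕜 V
  have hsucc := hM.eventually_le_exp_mul (q := ((k + 1 : ℕ) : ℝ) * l - ε) (r := l - 4 * ε) hL
    ((EReal.coe_lt_coe_iff.2 (sub_lt_self _ hε)).trans_le hlL)
    (hMl.trans_eq (congrArg _ (by push_cast; ring)))
  obtain ⟨E, hrank, hslow, hnear⟩ := exists_eventually_slow_subspaces hL.pos hsucc
    (eventually_exteriorNorm_le_exp_mul_exteriorNorm_succ hB hL hlL hε)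
  have hne : ∀ n, ∃ e ∈ (E n : Set V), e ≠ 0 := fun n => by
    refine (Submodule.ne_bot_iff _).1 fun h => ?_
    have := hrank n
    rw [h, finrank_bot] at this
    omega
  obtain ⟨u, hu, hO⟩ := exists_ne_zero_isBigO_exp (c := l - ε) (by positivity) hBD hne hslow hnear
    hD (hB.eventually_le_exp (q := l + ε) (EReal.coe_lt_coe_iff.2 (by linarith)))
    (by linarith) (by linarith) (by linarith)
  exact (Submodule.ne_bot_iff _).2 ⟨u, hO, hu⟩

end SlowSubspaceNontrivial

section OperatorCocycle

variable {Ω 𝕜 V : Type*} [NontriviallyNormedField 𝕜] [NormedAddCommGroup V] [NormedSpace 𝕜 V]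
  {T : Ω → Ω} {A : Ω → V →L[𝕜] V}

/-- The iterates `A (T^[n - 1] ω) ∘ ⋯ ∘ A (T ω) ∘ A ω` of the cocycle of operators over `T`
generated by `A`. -/
def operatorCocycle (T : Ω → Ω) (A : Ω → V →L[𝕜] V) : ℕ → Ω → V →L[𝕜] V
  | 0, _ => 1
  | n + 1, ω => operatorCocycle T A n (T ω) ∘L A ω

theorem operatorCocycle_one (ω : Ω) : operatorCocycle T A 1 ω = A ω := rfl

theorem operatorCocycle_add (m n : ℕ) (ω : Ω) :
    operatorCocycle T A (m + n) ω = operatorCocycle T A n (T^[m] ω) ∘L operatorCocycle T A m ω := by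
  induction m generalizing ω with
  | zero => rw [Nat.zero_add]; rfl
  | succ m ih =>
    rw [Nat.add_right_comm, operatorCocycle, ih, operatorCocycle, Function.iterate_succ_apply,
      ContinuousLinearMap.comp_assoc]

theorem operatorCocycle_succ (n : ℕ) (ω : Ω) :
    operatorCocycle T A (n + 1) ω = A (T^[n] ω) ∘L operatorCocycle T A n ω := by
  rw [operatorCocycle_add, operatorCocycle_one]

theorem injective_operatorCocycle (hA : ∀ ω, Function.Injective (A ω)) (n : ℕ) (ω : Ω) :
    Function.Injective (operatorCocycle T A n ω) := by
  induction n generalizing ω with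
  | zero => exact Function.injective_id
  | succ n ih => exact (ih (T ω)).comp (hA ω)

theorem map_slowSubspace_operatorCocycle {ω : Ω} (hA : Function.Surjective (A ω)) (c : ℝ) :
    (slowSubspace (fun n => operatorCocycle T A n ω) c).map (A ω).toLinearMap =
      slowSubspace (fun n => operatorCocycle T A n (T ω)) c := by
  rw [← slowSubspace_add_one]
  simp only [operatorCocycle]
  rw [← comap_slowSubspace, Submodule.map_comap_eq_of_surjective hA]

variable [MeasurableSpace Ω] {μ : Measure Ω} [IsProbabilityMeasure μ]

theorem ae_eventually_norm_comp_iterate_le_exp (hT : MeasurePreserving T μ μ) (hA : Measurable A)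
    (hint : Integrable (fun ω => max (Real.log ‖A ω‖) 0) μ) {ε : ℝ} (hε : 0 < ε) :
    ∀ᵐ ω ∂μ, ∀ᶠ n : ℕ in atTop, ‖A (T^[n] ω)‖ ≤ Real.exp (ε * n) := by
  filter_upwards [ae_eventually_comp_iterate_le hT (hA.norm.log.max measurable_const) hint hε]
    with ω hω
  filter_upwards [hω] with n hn
  exact (Real.le_exp_log _).trans (Real.exp_le_exp.2 ((le_max_left _ _).trans hn))

end OperatorCocycle

section ExteriorPowerRates

variable {Ω 𝕜 V : Type*} [MeasurableSpace Ω] {μ : Measure Ω} [IsProbabilityMeasure μ] {T : Ω → Ω}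
  [RCLike 𝕜] [NormedAddCommGroup V] [NormedSpace 𝕜 V] [FiniteDimensional 𝕜 V] {A : Ω → V →L[𝕜] V}

theorem measurable_operatorCocycle (hT : Measurable T) (hA : Measurable A) (n : ℕ) :
    Measurable (operatorCocycle T A n) := by
  have := FiniteDimensional.proper_rclike 𝕜 (V →L[𝕜] V)
  induction n with
  | zero => exact measurable_const
  | succ n ih => exact (ih.comp hT).mul hA

theorem exists_ae_hasExpRate_exteriorNorm_operatorCocycle (hT : Ergodic T μ) (hA : Measurable A)
    (hinj : ∀ ω, Function.Injective (A ω))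
    (hint : Integrable (fun ω => max (Real.log ‖A ω‖) 0) μ) {k : ℕ}
    (hk : k ≤ Module.finrank 𝕜 V) :
    ∃ l : EReal, l ≠ ⊤ ∧
      ∀ᵐ ω ∂μ, HasExpRate (fun n => exteriorNorm k (operatorCocycle T A n ω)) l := by
  have hpos : ∀ n ω, 0 < exteriorNorm k (operatorCocycle T A n ω) := fun n ω =>
    exteriorNorm_pos (injective_operatorCocycle hinj n ω) hk
  have hmeas : ∀ n, Measurable fun ω => Real.log (exteriorNorm k (operatorCocycle T A n ω)) :=
    fun n => ((continuous_exteriorNorm k).measurable.comp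
      (measurable_operatorCocycle hT.measurable hA n)).log
  have hsub : IsSubadditiveProcess T
      fun n ω => Real.log (exteriorNorm k (operatorCocycle T A n ω)) := fun m n ω => by
    rw [add_comm (Real.log _), ← Real.log_mul (hpos _ _).ne' (hpos _ _).ne']
    refine Real.log_le_log (hpos _ _) ?_
    rw [operatorCocycle_add]
    exact exteriorNorm_comp_le _ _ _
  have hint_k : Integrable
      (fun ω => max (Real.log (exteriorNorm k (operatorCocycle T A 1 ω))) 0) μ := by
    refine (hint.const_mul (k : ℝ)).mono' ((hmeas 1).max measurable_const).aestronglyMeasurable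
      (.of_forall fun ω => ?_)
    rw [Real.norm_of_nonneg (le_max_right _ _)]
    refine max_le ?_ (by positivity)
    calc Real.log (exteriorNorm k (operatorCocycle T A 1 ω)) ≤ Real.log (‖A ω‖ ^ k) :=
          Real.log_le_log (hpos 1 ω) (exteriorNorm_le_pow k (A ω))
      _ = k * Real.log ‖A ω‖ := Real.log_pow _ _
      _ ≤ k * max (Real.log ‖A ω‖) 0 := by gcongr; exact le_max_left _ _
  obtain ⟨l, hl, hlim⟩ := hsub.exists_ae_tendsto_div hT hmeas hint_k
  exact ⟨l, hl, hlim.mono fun ω hω => ⟨fun n => hpos n ω, hω⟩⟩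

end ExteriorPowerRates

section Dichotomy

theorem exists_lt_mul_of_lt_mul {L : ℕ → EReal} {l : ℝ} {d : ℕ} (h1 : l ≤ L 1)
    (hd : L (d + 1) < (((d + 1 : ℕ) * l : ℝ) : EReal)) :
    ∃ k < d, (((k + 1 : ℕ) * l : ℝ) : EReal) ≤ L (k + 1) ∧
      L (k + 2) < (((k + 2 : ℕ) * l : ℝ) : EReal) := by
  induction d with
  | zero => exact absurd hd (by simpa using h1)
  | succ d ih =>
    rcases lt_or_ge (L (d + 1)) (((d + 1 : ℕ) * l : ℝ) : EReal) with hlt | hge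
    · obtain ⟨k, hk, h⟩ := ih hlt
      exact ⟨k, hk.trans d.lt_succ_self, h⟩
    · exact ⟨d, d.lt_succ_self, hge, hd⟩

theorem exists_pos_lt_coe_sub_mul {x : EReal} {y c : ℝ} (hc : 0 < c) (h : x < y) :
    ∃ ε > 0, x < ((y - c * ε : ℝ) : EReal) := by
  obtain ⟨q, hxq, hqy⟩ := EReal.lt_iff_exists_real_btwn.1 h
  refine ⟨(y - q) / c, div_pos (sub_pos.2 (EReal.coe_lt_coe_iff.1 hqy)) hc, ?_⟩
  rwa [mul_div_cancel₀ _ hc.ne', sub_sub_cancel]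

variable {Ω 𝕜 V : Type*} [MeasurableSpace Ω] {μ : Measure Ω} [IsProbabilityMeasure μ] {T : Ω → Ω}
  [RCLike 𝕜] [NormedAddCommGroup V] [NormedSpace 𝕜 V] [FiniteDimensional 𝕜 V]
  [MeasurableSpace V] [BorelSpace V] {A : Ω → V →L[𝕜] V}

theorem exists_invariant_subspace_of_rate_gap (hT : Ergodic T μ) (hA : Measurable A)
    (hinj : ∀ ω, Function.Injective (A ω))
    (hint : Integrable (fun ω => max (Real.log ‖A ω‖) 0) μ) {l : ℝ} {k : ℕ} {L M : EReal}
    (hk : k + 1 < Module.finrank 𝕜 V)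
    (hB : ∀ᵐ ω ∂μ, HasExpRate (fun n => ‖operatorCocycle T A n ω‖) l)
    (hL : ∀ᵐ ω ∂μ, HasExpRate (fun n => exteriorNorm (k + 1) (operatorCocycle T A n ω)) L)
    (hM : ∀ᵐ ω ∂μ, HasExpRate (fun n => exteriorNorm (k + 2) (operatorCocycle T A n ω)) M)
    (hlL : (((k + 1 : ℕ) * l : ℝ) : EReal) ≤ L)
    (hMl : M < (((k + 2 : ℕ) * l : ℝ) : EReal)) :
    ∃ E : Ω → Submodule 𝕜 V, MeasurableSet {p : Ω × V | p.2 ∈ E p.1} ∧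
      (∀ᵐ ω ∂μ, E ω ≠ ⊥ ∧ E ω ≠ ⊤) ∧ ∀ ω, (E ω).map (A ω).toLinearMap = E (T ω) := by
  obtain ⟨ε, hε, hMε⟩ := exists_pos_lt_coe_sub_mul (c := 5) (by norm_num) hMl
  have := FiniteDimensional.complete 𝕜 V
  have := FiniteDimensional.proper_rclike 𝕜 V
  refine ⟨fun ω => slowSubspace (fun n => operatorCocycle T A n ω) (l - ε),
    measurableSet_mem_slowSubspace (measurable_operatorCocycle hT.measurable hA) _, ?_,
    fun ω => map_slowSubspace_operatorCocycle (LinearMap.surjective_of_injective (hinj ω)) _⟩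
  filter_upwards [hB, hL, hM,
    ae_eventually_norm_comp_iterate_le_exp hT.toMeasurePreserving hA hint hε] with ω hB hL hM hD
  exact ⟨slowSubspace_ne_bot hk hε (fun n => operatorCocycle_succ n ω) hD hB hL hM hlL hMε,
    slowSubspace_ne_top hB (EReal.coe_lt_coe_iff.2 (sub_lt_self l hε))⟩

theorem reducibility_or_growth_dichotomy_general [Nontrivial V] (hT : Ergodic T μ)
    (hA : Measurable A) (hinj : ∀ ω, Function.Injective (A ω))
    (hint : Integrable (fun ω => max (Real.log ‖A ω‖) 0) μ) :
    (∃ l : EReal, l ≠ ⊤ ∧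
      ∀ᵐ ω ∂μ, HasUniformExpRate (fun n => operatorCocycle T A n ω) l) ∨
    ∃ E : Ω → Submodule 𝕜 V, MeasurableSet {p : Ω × V | p.2 ∈ E p.1} ∧
      (∀ᵐ ω ∂μ, E ω ≠ ⊥ ∧ E ω ≠ ⊤) ∧ ∀ ω, (E ω).map (A ω).toLinearMap = E (T ω) := by
  obtain ⟨d, hd⟩ := Nat.exists_eq_succ_of_ne_zero (Module.finrank_pos (R := 𝕜) (M := V)).ne'
  choose! L hLtop hL using fun k (hk : k ≤ Module.finrank 𝕜 V) =>
    exists_ae_hasExpRate_exteriorNorm_operatorCocycle hT hA hinj hint hk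
  have hL1 : ∀ᵐ ω ∂μ, HasExpRate (fun n => ‖operatorCocycle T A n ω‖) (L 1) := by
    simpa only [exteriorNorm_one] using hL 1 (by omega)
  rcases eq_or_ne (L 1) ⊥ with hbot | hbot
  · refine .inl ⟨⊥, bot_ne_top, hL1.mono fun ω hω => ?_⟩
    exact hasUniformExpRate_of_eventually_exp_mul_norm_le (hbot ▸ hω)
      (fun n => injective_operatorCocycle hinj n ω) fun q hq => absurd hq not_lt_bot
  obtain ⟨l, hl⟩ : ∃ l : ℝ, (l : EReal) = L 1 := ⟨_, EReal.coe_toReal (hLtop 1 (by omega)) hbot⟩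
  rw [← hl] at hL1
  rcases le_or_gt (((d + 1 : ℕ) * l : ℝ) : EReal) (L (d + 1)) with hle | hlt
  · refine .inl ⟨l, EReal.coe_ne_top l, ?_⟩
    filter_upwards [hL1, hL (d + 1) hd.ge] with ω hω hωd
    exact hasUniformExpRate_of_le_exteriorNorm_rate hd hω hωd hle
  · obtain ⟨k, hk, hge, hgap⟩ := exists_lt_mul_of_lt_mul hl.le hlt
    exact .inr (exists_invariant_subspace_of_rate_gap hT hA hinj hint (by omega) hL1
      (hL (k + 1) (by omega)) (hL (k + 2) (by omega)) hge hgap)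

end Dichotomy

section MatrixCocycle

variable {Ω : Type*} {d : ℕ}

theorem toEuclideanCLM_cocycIter (T : Ω → Ω) (A : Ω → Matrix (Fin d) (Fin d) ℝ) (n : ℕ) (ω : Ω) :
    Matrix.toEuclideanCLM (𝕜 := ℝ) (cocycIter T A n ω) =
      operatorCocycle T (fun ω => Matrix.toEuclideanCLM (𝕜 := ℝ) (A ω)) n ω := by
  induction n generalizing ω with
  | zero => exact map_one _
  | succ n ih =>
    rw [cocycIter, map_mul, ih]
    rfl

theorem measurable_toEuclideanCLM [MeasurableSpace Ω] {A : Ω → Matrix (Fin d) (Fin d) ℝ}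
    (hA : ∀ i j, Measurable fun ω => A ω i j) :
    Measurable fun ω => Matrix.toEuclideanCLM (𝕜 := ℝ) (A ω) := by
  let f : Matrix (Fin d) (Fin d) ℝ →ₗ[ℝ]
      EuclideanSpace ℝ (Fin d) →L[ℝ] EuclideanSpace ℝ (Fin d) :=
    (Matrix.toEuclideanCLM (𝕜 := ℝ) (n := Fin d)).toAlgEquiv.toLinearMap
  exact (f ∘ₗ (Matrix.ofLinearEquiv ℝ).toLinearMap).continuous_of_finiteDimensional.measurable.comp
    (measurable_pi_lambda _ fun i => measurable_pi_lambda _ fun j => hA i j)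

theorem injective_toEuclideanCLM (A : Matrix.GeneralLinearGroup (Fin d) ℝ) :
    Function.Injective (Matrix.toEuclideanCLM (𝕜 := ℝ) (A : Matrix (Fin d) (Fin d) ℝ)) :=
  (ContinuousLinearMap.isUnit_iff_bijective.1 (A.isUnit.map _)).1

end MatrixCocycle

/-- **Reducibility or growth dichotomy.**  Either all nonzero vectors grow at a single
exponential rate `λ ∈ ℝ ∪ {−∞}` (uniformly on the unit sphere for fixed `ω`), or there is
a measurable family of nontrivial proper invariant subspaces. -/
theorem reducibility_or_growth_dichotomy
    {Ω : Type*} [MeasurableSpace Ω] {μ : Measure Ω} [IsProbabilityMeasure μ]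
    {T : Ω → Ω} (hT : Ergodic T μ) {d : ℕ} (hd : 0 < d)
    (A : Ω → Matrix.GeneralLinearGroup (Fin d) ℝ)
    (hAmeas : ∀ i j, Measurable fun ω => (A ω : Matrix (Fin d) (Fin d) ℝ) i j)
    (hint : Integrable (fun ω =>
      max (Real.log (matOpNorm (A ω : Matrix (Fin d) (Fin d) ℝ))) 0) μ) :
    (∃ lam : EReal, lam ≠ ⊤ ∧
      ∀ᵐ ω ∂μ,
        (∀ v : EuclideanSpace ℝ (Fin d), v ≠ 0 →
          Tendsto
            (fun N : ℕ =>
              ((Real.log ‖Matrix.toEuclideanLin (cocycIter T (fun ω' =>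
                  (A ω' : Matrix (Fin d) (Fin d) ℝ)) N ω) v‖ / (N : ℝ) : ℝ) : EReal))
            atTop (𝓝 lam)) ∧
        (∀ U : Set EReal, U ∈ 𝓝 lam →
          ∀ᶠ N : ℕ in atTop, ∀ v : EuclideanSpace ℝ (Fin d), ‖v‖ = 1 →
            ((Real.log ‖Matrix.toEuclideanLin (cocycIter T (fun ω' =>
                (A ω' : Matrix (Fin d) (Fin d) ℝ)) N ω) v‖ / (N : ℝ) : ℝ) : EReal) ∈ U)) ∨
    (∃ E : Ω → Submodule ℝ (EuclideanSpace ℝ (Fin d)),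
      MeasurableSet {p : Ω × EuclideanSpace ℝ (Fin d) | p.2 ∈ E p.1} ∧
      (∀ᵐ ω ∂μ, 0 < Module.finrank ℝ (E ω) ∧ Module.finrank ℝ (E ω) < d) ∧
      (∀ᵐ ω ∂μ,
        (E ω).map (Matrix.toEuclideanLin (A ω : Matrix (Fin d) (Fin d) ℝ)) = E (T ω))) := by
  have : Nonempty (Fin d) := ⟨⟨0, hd⟩⟩
  refine (reducibility_or_growth_dichotomy_general hT (measurable_toEuclideanCLM hAmeas)
    (fun ω => injective_toEuclideanCLM (A ω)) hint).imp ?_ ?_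
  · rintro ⟨l, hl, h⟩
    simp only [← toEuclideanCLM_cocycIter] at h
    exact ⟨l, hl, h.mono fun ω hω =>
      ⟨fun v hv => hω.tendsto hv, fun U hU => hω.eventually_forall_norm_eq_one hU⟩⟩
  · rintro ⟨E, hE, hne, hinv⟩
    refine ⟨E, hE, hne.mono fun ω ⟨hbot, htop⟩ => ⟨?_, ?_⟩, .of_forall hinv⟩
    · exact Nat.pos_of_ne_zero (mt Submodule.finrank_eq_zero.1 hbot)
    · simpa using Submodule.finrank_lt htop
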